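/- Let I be a finite index set and let t, q : I → ℝⁿ be families of vectors such that {t_i : i ∈ I} spans ℝⁿ. Call a finite list C of pairs of vectors a circuit if each entry of C equals (t_i, q_i) or (−t_i, −q_i) for some i ∈ I and t(C) = 0. Then the following are equivalent: (i) φ(t⁰, C) = 0 for every t⁰ ∈ ℝⁿ and every circuit C; (ii) q_i · t_j = q_j · t_i for all pairs i, j ∈ I. -/

import Mathlib

/-!
Under the symmetry condition, a path `P` with entries `±(t i, q i)` satisfies
`φ(t⁰, P) = q(P) · t⁰ + ½ q(P) · t(P)` (`phi_eq`, by induction on `P`), and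
`q(P) · t j = q j · t(P)` (`qSum_dotProduct`). If `t(P) = 0`, the second identity makes `q(P)`
orthogonal to every `t j`, hence zero because the `t j` span, and the first gives `φ = 0`.

Conversely, `φ(0, C) = q j · t i - q i · t j` for the parallelogram circuit `C` with edges
`t i, t j, -t i, -t j`.
-/

open Matrix

/-- `tSum P = Σ_k t_k`, the sum of the first components (lattice vectors) of a path. -/
def tSum {n : ℕ} (P : List ((Fin n → ℝ) × (Fin n → ℝ))) : Fin n → ℝ :=
  (P.map Prod.fst).sum

/-- `qSum P = Σ_k q_k`, the sum of the second components (facet vectors) of a path. -/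
def qSum {n : ℕ} (P : List ((Fin n → ℝ) × (Fin n → ℝ))) : Fin n → ℝ :=
  (P.map Prod.snd).sum

/-- `φ(t⁰, P) = Σ_k q_k · (t⁰ + Σ_{r<k} t_r + ½ t_k)`, for a path
`P = ((t₁,q₁),…,(t_s,q_s))` of pairs of vectors in `ℝⁿ`. -/
noncomputable def phi {n : ℕ} (t0 : Fin n → ℝ) (P : List ((Fin n → ℝ) × (Fin n → ℝ))) : ℝ :=
  ∑ k : Fin P.length,
    (P.get k).2 ⬝ᵥ (t0 +
      (∑ r ∈ Finset.univ.filter (fun r : Fin P.length => r < k), (P.get r).1) +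
      (1/2 : ℝ) • (P.get k).1)

theorem phi_nil {n : ℕ} (t0 : Fin n → ℝ) : phi t0 [] = 0 := by
  simp [phi]

/-- Traversing the first edge moves the base point of the rest of the path to `t0 + p.1`. -/
theorem phi_cons {n : ℕ} (t0 : Fin n → ℝ) (p : (Fin n → ℝ) × (Fin n → ℝ))
    (P : List ((Fin n → ℝ) × (Fin n → ℝ))) :
    phi t0 (p :: P) = p.2 ⬝ᵥ (t0 + (1/2 : ℝ) • p.1) + phi (t0 + p.1) P := by
  unfold phi
  simp only [Finset.sum_filter, List.length_cons]
  rw [Fin.sum_univ_succ]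
  congr 1
  · simp
  · refine Finset.sum_congr rfl fun k _ => ?_
    rw [Fin.sum_univ_succ]
    simp [add_assoc]

theorem tSum_cons {n : ℕ} (p : (Fin n → ℝ) × (Fin n → ℝ))
    (P : List ((Fin n → ℝ) × (Fin n → ℝ))) : tSum (p :: P) = p.1 + tSum P := by
  simp [tSum]

theorem qSum_cons {n : ℕ} (p : (Fin n → ℝ) × (Fin n → ℝ))
    (P : List ((Fin n → ℝ) × (Fin n → ℝ))) : qSum (p :: P) = p.2 + qSum P := by
  simp [qSum]

theorem qSum_dotProduct {n : ℕ} (a b : Fin n → ℝ) (P : List ((Fin n → ℝ) × (Fin n → ℝ)))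
    (h : ∀ p ∈ P, p.2 ⬝ᵥ a = b ⬝ᵥ p.1) : qSum P ⬝ᵥ a = b ⬝ᵥ tSum P := by
  induction P with
  | nil => simp [qSum, tSum]
  | cons p P ih =>
    rw [qSum_cons, tSum_cons, add_dotProduct, dotProduct_add, h p (by simp),
      ih fun r hr => h r (by simp [hr])]

/-- For a path with pairwise symmetric entries, `φ` depends only on the base point and the
sums `q(P)` and `t(P)`. -/
theorem phi_eq {n : ℕ} (P : List ((Fin n → ℝ) × (Fin n → ℝ)))
    (h : ∀ p ∈ P, ∀ r ∈ P, p.2 ⬝ᵥ r.1 = r.2 ⬝ᵥ p.1) (t0 : Fin n → ℝ) :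
    phi t0 P = qSum P ⬝ᵥ t0 + (1/2 : ℝ) * (qSum P ⬝ᵥ tSum P) := by
  induction P generalizing t0 with
  | nil => simp [phi_nil, qSum]
  | cons p P ih =>
    have hp : qSum P ⬝ᵥ p.1 = p.2 ⬝ᵥ tSum P :=
      qSum_dotProduct p.1 p.2 P fun r hr => h r (by simp [hr]) p (by simp)
    rw [phi_cons, ih fun r hr s hs => h r (by simp [hr]) s (by simp [hs])]
    simp only [qSum_cons, tSum_cons, add_dotProduct, dotProduct_add, dotProduct_smul,
      smul_eq_mul, hp]
    ring

/-- Lemma `lin` of Deza–Grishukhin: for families `t, q : I → ℝⁿ` with the `t i`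
spanning `ℝⁿ`, the function `φ` vanishes on every circuit (a path whose entries are
of the form `(t i, q i)` or `(-t i, -q i)` and whose lattice vectors sum to `0`) if
and only if `q i · t j = q j · t i` for all pairs `i, j`. -/
theorem stmt_11 (n : ℕ) (I : Type*) [Fintype I]
    (t q : I → (Fin n → ℝ))
    (ht : Submodule.span ℝ (Set.range t) = ⊤) :
    (∀ (t0 : Fin n → ℝ) (C : List ((Fin n → ℝ) × (Fin n → ℝ))),
        (∀ p ∈ C, ∃ i : I, p = (t i, q i) ∨ p = (-t i, -q i)) → tSum C = 0 →
        phi t0 C = 0) ↔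
      (∀ i j : I, q i ⬝ᵥ t j = q j ⬝ᵥ t i) := by
  constructor
  · intro h i j
    have hC := h 0 [(t i, q i), (t j, q j), (-t i, -q i), (-t j, -q j)]
      (by
        intro p hp
        simp only [List.mem_cons, List.not_mem_nil, or_false] at hp
        rcases hp with rfl | rfl | rfl | rfl
        · exact ⟨i, Or.inl rfl⟩
        · exact ⟨j, Or.inl rfl⟩
        · exact ⟨i, Or.inr rfl⟩
        · exact ⟨j, Or.inr rfl⟩)
      (by simp [tSum])
    simp only [phi_cons, phi_nil, dotProduct_add, neg_dotProduct, dotProduct_neg,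
      dotProduct_smul, smul_eq_mul, dotProduct_zero] at hC
    linarith
  · intro h t0 C hC hsum
    have hsymm : ∀ p ∈ C, ∀ r ∈ C, p.2 ⬝ᵥ r.1 = r.2 ⬝ᵥ p.1 := by
      intro p hp r hr
      obtain ⟨i, rfl | rfl⟩ := hC p hp <;> obtain ⟨j, rfl | rfl⟩ := hC r hr <;>
        simp [h i j]
    have horth : ∀ j, qSum C ⬝ᵥ t j = 0 := by
      intro j
      rw [qSum_dotProduct (t j) (q j) C, hsum, dotProduct_zero]
      intro p hp
      obtain ⟨i, rfl | rfl⟩ := hC p hp <;> simp [h i j]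
    have hall : qSum C ⬝ᵥ t0 = 0 := by
      have hmem : t0 ∈ Submodule.span ℝ (Set.range t) := ht ▸ Submodule.mem_top
      induction hmem using Submodule.span_induction with
      | mem x hx =>
        obtain ⟨j, rfl⟩ := hx
        exact horth j
      | zero => simp
      | add x y _ _ hx hy => rw [dotProduct_add, hx, hy, add_zero]
      | smul c x _ hx => rw [dotProduct_smul, hx, smul_zero]
    rw [phi_eq C hsymm t0, hall, hsum]
    simp
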